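/- arXiv:1212.1891 — 2 statements merged into one kernel-verified Lean document; each statement's English description precedes it below -/
import Mathlib

section
/- Let Ω be a finite nonempty type, let I be a finite type, and for each i : I let B i be a finite subset of Ω satisfying 3 · |B i| ≤ |Ω|. Let n ≥ 1 and m be natural numbers with |I| ≤ 2^n and m ≥ 2n. Then 3 · |{ r : Fin m → Ω | ∃ i : I, ∀ j : Fin m, r j ∈ B i }| < |Ω|^m. -/
/-!
For fixed `i`, a random tuple lies entirely in `B i` with probability at most `3⁻ᵐ`, so by the
union bound it does so for some `i` with probability at most `2ⁿ / 3ᵐ < 3ⁿ / 3ᵐ`, and the latter is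
at most `1 / 3` as soon as `n < m`. Multiplying through by `3ᵐ` keeps the whole computation in `ℕ`.
-/

theorem card_exists_forall_mem_le_sum_prod {ι I : Type*} {Ω : ι → Type*} [Fintype ι] [Fintype I]
    (B : I → ∀ j, Finset (Ω j)) [Fintype { r : ∀ j, Ω j // ∃ i, ∀ j, r j ∈ B i j }] :
    Fintype.card { r : ∀ j, Ω j // ∃ i, ∀ j, r j ∈ B i j } ≤ ∑ i, ∏ j, (B i j).card := by
  classical
  calc Fintype.card { r : ∀ j, Ω j // ∃ i, ∀ j, r j ∈ B i j }
      = (Finset.univ.biUnion fun i ↦ Fintype.piFinset (B i)).card :=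
        Fintype.card_of_subtype _ (by simp)
    _ ≤ ∑ i, (Fintype.piFinset (B i)).card := Finset.card_biUnion_le
    _ = ∑ i, ∏ j, (B i j).card := by simp only [Fintype.card_piFinset]

theorem mul_pow_lt_pow_of_lt {R : Type*} [Semiring R] [PartialOrder R] [IsStrictOrderedRing R]
    {a b : R} {n m : ℕ} (ha : 0 ≤ a) (hab : a < b) (hb : 1 ≤ b) (hn : n ≠ 0) (hnm : n < m) :
    b * a ^ n < b ^ m := by
  calc b * a ^ n < b * b ^ n :=
        mul_lt_mul_of_pos_left (pow_lt_pow_left₀ hab ha hn) (ha.trans_lt hab)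
    _ = b ^ (n + 1) := (pow_succ' b n).symm
    _ ≤ b ^ m := pow_le_pow_right₀ hb hnm

section UniformDensity

-- The `Fintype` instance is arbitrary because `Fin m` has its own decision procedure for `∀ j`,
-- which differs from the one found for a general `ι`.
variable {ι Ω I : Type*} [Fintype ι] [Fintype Ω] [Fintype I] (B : I → Finset Ω)
  [Fintype { r : ι → Ω // ∃ i, ∀ j, r j ∈ B i }] {k : ℕ}

theorem pow_mul_card_exists_forall_mem_le (hB : ∀ i, k * (B i).card ≤ Fintype.card Ω) :
    k ^ Fintype.card ι * Fintype.card { r : ι → Ω // ∃ i, ∀ j, r j ∈ B i }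
      ≤ Fintype.card I * Fintype.card Ω ^ Fintype.card ι := by
  calc k ^ Fintype.card ι * Fintype.card { r : ι → Ω // ∃ i, ∀ j, r j ∈ B i }
      ≤ k ^ Fintype.card ι * ∑ i, ∏ _j : ι, (B i).card :=
        Nat.mul_le_mul_left _ (card_exists_forall_mem_le_sum_prod fun i _ ↦ B i)
    _ = ∑ i, (k * (B i).card) ^ Fintype.card ι := by
        simp only [Finset.prod_const, Finset.card_univ, Finset.mul_sum, mul_pow]
    _ ≤ ∑ _i : I, Fintype.card Ω ^ Fintype.card ι :=
        Finset.sum_le_sum fun i _ ↦ Nat.pow_le_pow_left (hB i) _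
    _ = Fintype.card I * Fintype.card Ω ^ Fintype.card ι := by
        rw [Finset.sum_const, Finset.card_univ, smul_eq_mul]

theorem hitting_set_bound_general [Nonempty Ω] {c : ℕ}
    (hB : ∀ i, k * (B i).card ≤ Fintype.card Ω)
    (hI : c * Fintype.card I < k ^ Fintype.card ι) :
    c * Fintype.card { r : ι → Ω // ∃ i, ∀ j, r j ∈ B i }
      < Fintype.card Ω ^ Fintype.card ι := by
  have hΩ : 0 < Fintype.card Ω ^ Fintype.card ι := pow_pos Fintype.card_pos _
  refine lt_of_mul_lt_mul_left (a := k ^ Fintype.card ι) ?_ (Nat.zero_le _)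
  calc k ^ Fintype.card ι * (c * Fintype.card { r : ι → Ω // ∃ i, ∀ j, r j ∈ B i })
      = c * (k ^ Fintype.card ι * Fintype.card { r : ι → Ω // ∃ i, ∀ j, r j ∈ B i }) :=
        Nat.mul_left_comm _ _ _
    _ ≤ c * (Fintype.card I * Fintype.card Ω ^ Fintype.card ι) :=
        Nat.mul_le_mul_left c (pow_mul_card_exists_forall_mem_le B hB)
    _ = c * Fintype.card I * Fintype.card Ω ^ Fintype.card ι := (Nat.mul_assoc _ _ _).symm
    _ < k ^ Fintype.card ι * Fintype.card Ω ^ Fintype.card ι := Nat.mul_lt_mul_of_pos_right hI hΩ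

end UniformDensity

/-- Hitting-set bound: with at most `2^n` inputs, each with a bad set of density at most `1/3`,
fewer than a third of all `m`-tuples (`m ≥ 2n`, `n ≥ 1`) are entirely bad for some input. -/
theorem hitting_set_bound {Ω I : Type*} [Fintype Ω] [DecidableEq Ω] [Nonempty Ω] [Fintype I]
    (B : I → Finset Ω) (hB : ∀ i : I, 3 * (B i).card ≤ Fintype.card Ω)
    (n m : ℕ) (hn : 1 ≤ n) (hI : Fintype.card I ≤ 2 ^ n) (hm : 2 * n ≤ m) :
    3 * Fintype.card { r : Fin m → Ω // ∃ i : I, ∀ j : Fin m, r j ∈ B i }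
      < Fintype.card Ω ^ m := by
  have hcard : 3 * Fintype.card I < 3 ^ m := (Nat.mul_le_mul_left 3 hI).trans_lt <|
    mul_pow_lt_pow_of_lt (by norm_num) (by norm_num) (by norm_num) (by omega) (by omega)
  simpa only [Fintype.card_fin] using
    hitting_set_bound_general (ι := Fin m) B hB (by rwa [Fintype.card_fin])
end

section
/- Let X be a finite type, let K and B be natural numbers with B ≥ 1, and let π : X → Fin K be a map each of whose fibers has exactly B elements. Let F be a finite set of functions from X to Bool with |F| < 2^B. Then there exists a function g : X → Bool such that for every f ∈ F and every block index b : Fin K there is some x : X with π x = b and g x ≠ f x. Consequently, every f ∈ F differs from g on at least K points of X. -/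
/-!
The members of `F` induce at most `|F| < 2 ^ B` patterns on a block of size `B`, so some pattern on
that block is induced by none of them. The blocks being disjoint, such patterns, one for each
block, glue to the function `g`.
-/

open Set
open Cardinal hiding univ

section

universe u v w

theorem exists_notMem_image_of_lift_mk_lt {α : Type u} {β : Type v} {f : α → β} {s : Set α}
    (hs : lift.{v} #s < lift.{u} #β) : ∃ b, b ∉ f '' s := by
  refine (ne_univ_iff_exists_notMem _).mp fun himage => hs.not_ge ?_
  simpa [himage] using mk_image_le_lift (f := f) (s := s)

theorem lift_mk_le_lift_mk_of_surjOn {α : Type u} {β : Type v} {f : α → β} {s : Set α} {t : Set β}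
    (hf : SurjOn f s t) : lift.{u} #t ≤ lift.{v} #s :=
  (lift_le.mpr (mk_le_mk_of_subset hf)).trans mk_image_le_lift

variable {X : Type u} {α : X → Type v} {ι : Type w}

theorem exists_forall_domRestrict_fiber_eq (π : X → ι) (p : ∀ b, ∀ x : π ⁻¹' {b}, α x) :
    ∃ g : ∀ x, α x, ∀ b, (π ⁻¹' {b}).domRestrict g = p b := by
  refine ⟨fun x => p (π x) ⟨x, rfl⟩, fun b => funext ?_⟩
  rintro ⟨x, rfl⟩
  rfl

theorem block_diagonalization_general (π : X → ι) (F : Set (∀ x, α x))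
    (hF : ∀ b, #F < #(∀ x : π ⁻¹' {b}, α x)) :
    ∃ g : ∀ x, α x,
      (∀ f ∈ F, ∀ b, ∃ x, π x = b ∧ g x ≠ f x) ∧
      ∀ f ∈ F, lift.{u} #ι ≤ lift.{w} #{x | g x ≠ f x} := by
  have hnew (b : ι) : ∃ p, p ∉ (π ⁻¹' {b}).domRestrict '' F :=
    exists_notMem_image_of_lift_mk_lt (lift_lt.mpr (hF b))
  choose p hp using hnew
  obtain ⟨g, hg⟩ := exists_forall_domRestrict_fiber_eq π p
  have hdiff : ∀ f ∈ F, ∀ b, ∃ x, π x = b ∧ g x ≠ f x := by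
    intro f hf b
    have hne : (π ⁻¹' {b}).domRestrict g ≠ (π ⁻¹' {b}).domRestrict f := fun h =>
      hp b ⟨f, hf, h.symm.trans (hg b)⟩
    obtain ⟨⟨x, hx⟩, hgf⟩ := Function.ne_iff.mp hne
    exact ⟨x, hx, hgf⟩
  refine ⟨g, hdiff, fun f hf => ?_⟩
  have hsurj : SurjOn π {x | g x ≠ f x} univ := fun b _ =>
    let ⟨x, hx, hgf⟩ := hdiff f hf b
    ⟨x, hgf, hx⟩
  simpa using lift_mk_le_lift_mk_of_surjOn hsurj

end

/-- Block diagonalization: if `X` is partitioned by `π` into `K` blocks of size `B ≥ 1` and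
`F` is a family of fewer than `2^B` Boolean functions on `X`, then there is `g : X → Bool`
disagreeing with every `f ∈ F` in every block, hence on at least `K` points. -/
theorem block_diagonalization {X : Type*} [Fintype X] (K B : ℕ) (hB : 1 ≤ B)
    (π : X → Fin K) (hπ : ∀ b : Fin K, (Finset.univ.filter fun x : X => π x = b).card = B)
    (F : Finset (X → Bool)) (hF : F.card < 2 ^ B) :
    ∃ g : X → Bool,
      (∀ f ∈ F, ∀ b : Fin K, ∃ x : X, π x = b ∧ g x ≠ f x) ∧
      ∀ f ∈ F, K ≤ (Finset.univ.filter fun x : X => g x ≠ f x).card := by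
  have hblock (b : Fin K) : #(π ⁻¹' {b}) = B :=
    (mk_fintype {x // π x = b}).trans (by rw [Fintype.card_subtype, hπ])
  have hpatterns (b : Fin K) : #F < #(π ⁻¹' {b} → Bool) := by
    simpa [hblock] using mod_cast hF
  simpa [Fintype.card_subtype] using block_diagonalization_general π (F : Set (X → Bool)) hpatterns
end
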